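/- Let λ, μ, ν ∈ P[n] and let T be a λ-dominant set-valued tableau of shape μ with entries ≤ n and weight ν−λ, with rows T_1,…,T_n from the top. For 1≤i≤n and 0≤k≤i, let N_{i,k} := λ_i + (number of occurrences of i in the rows T_1,…,T_k). Then the triangular array Y_T = (y_{i,j})_{1≤j≤i≤n} defined by y_{i,j} := N_{n−i+j, n−i} is a Gelfand–Tsetlin pattern lying in GT_Z(λ). -/

import Mathlib

/-!
Writing `k = n - i` and `a = k + j`, the two interlacing conditions for `Y_T` read
`N_{a+1,k} ≤ N_{a+1,k+1}`, which holds because the counts only grow with `k`, and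
`N_{a+1,k+1} ≤ N_{a,k}`. For the latter, the word of row `k+1` (right to left, each cell in
decreasing order) is weakly decreasing (`rowWord_pairwise`), so it has a prefix that contains all
of its `a+1`'s and none of its `a`'s (`exists_prefix`). Dominance applied to the prefix of
`r(T_lam) * r(T)` ending there is exactly the desired inequality (`Ndom_succ_succ_le`).
-/

/-!
Common combinatorial definitions: partitions, (skew) set-valued tableaux,
contratableaux, reading words, dominance, Gelfand-Tsetlin patterns, and the
maps Υ and Ω.  Partitions are encoded as functions `ℕ → ℕ` whose parts are
`lam 1, lam 2, …` (with `lam 0 = 0` as a normalization).  Tableaux are encoded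
as functions `ℕ → ℕ → Finset ℕ` assigning to each box (row, column), both
indexed from `1`, its (finite) set of entries, with value `∅` outside the
shape. -/

/-- `lam` is a partition with at most `n` nonzero parts `lam 1 ≥ lam 2 ≥ ⋯`. -/
def IsPartition (n : ℕ) (lam : ℕ → ℕ) : Prop :=
  lam 0 = 0 ∧ (∀ i, 1 ≤ i → lam (i + 1) ≤ lam i) ∧ (∀ i, n < i → lam i = 0)

/-- `|lam|`, the sum of the parts of a partition in `P[n]`. -/
def sumParts (n : ℕ) (lam : ℕ → ℕ) : ℕ := ∑ i ∈ Finset.Icc 1 n, lam i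

/-- The boxes of the skew Young diagram `lam/mu` (rows indexed from the top,
starting at `1`; columns from the left, starting at `1`). -/
def SkewBox (lam mu : ℕ → ℕ) (i j : ℕ) : Prop :=
  1 ≤ i ∧ mu i < j ∧ j ≤ lam i

/-- The boxes of the straight Young diagram of `mu`. -/
def ShapeBox (mu : ℕ → ℕ) (i j : ℕ) : Prop :=
  1 ≤ i ∧ 1 ≤ j ∧ j ≤ mu i

/-- A semi-standard set-valued tableau with entries in `[n] = {1, …, n}` on a
given set `box` of boxes (rows indexed from the top): every box carries a
nonempty subset of `[n]`, rows weakly increase from left to right, columns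
strictly increase from top to bottom, and the filling vanishes off the shape. -/
def IsSSVT (n : ℕ) (box : ℕ → ℕ → Prop) (T : ℕ → ℕ → Finset ℕ) : Prop :=
  (∀ i j, box i j → (T i j).Nonempty) ∧
  (∀ i j, box i j → T i j ⊆ Finset.Icc 1 n) ∧
  (∀ i j, ¬ box i j → T i j = ∅) ∧
  (∀ i j, box i j → box i (j + 1) → ∀ a ∈ T i j, ∀ b ∈ T i (j + 1), a ≤ b) ∧
  (∀ i j, box i j → box (i + 1) j → ∀ a ∈ T i j, ∀ b ∈ T (i + 1) j, a < b)

/-- The boxes of the rotated shape `C(lam)` (for `lam ∈ P[n]`): the `j`-th row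
from the *bottom* (`1 ≤ j ≤ n`) consists of `lam j` right-justified boxes, in
columns `lam 1 - lam j + 1, …, lam 1`. -/
def ContraBox (n : ℕ) (lam : ℕ → ℕ) (j c : ℕ) : Prop :=
  1 ≤ j ∧ j ≤ n ∧ lam 1 - lam j < c ∧ c ≤ lam 1

/-- A set-valued contratableau of shape `lam` with entries in `[n]`: a
semi-standard set-valued tableau of shape `C(lam)`.  Here `T j c` is the box in
the `j`-th row from the bottom and column `c`; "columns strictly increase from
top to bottom" says entries of row `j+1` (which lies above row `j`) are
strictly smaller than those below them in row `j`. -/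
def IsSVCT (n : ℕ) (lam : ℕ → ℕ) (T : ℕ → ℕ → Finset ℕ) : Prop :=
  (∀ j c, ContraBox n lam j c → (T j c).Nonempty) ∧
  (∀ j c, ContraBox n lam j c → T j c ⊆ Finset.Icc 1 n) ∧
  (∀ j c, ¬ ContraBox n lam j c → T j c = ∅) ∧
  (∀ j c, ContraBox n lam j c → ContraBox n lam j (c + 1) →
    ∀ a ∈ T j c, ∀ b ∈ T j (c + 1), a ≤ b) ∧
  (∀ j c, ContraBox n lam j c → ContraBox n lam (j + 1) c →
    ∀ a ∈ T (j + 1) c, ∀ b ∈ T j c, a < b)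

/-- The entries of one cell, read in decreasing order. -/
def cellWord (S : Finset ℕ) : List ℕ := (S.sort (· ≤ ·)).reverse

/-- The row word: rows are read from top to bottom, each row from right to
left, the entries of each cell in decreasing order (reading over the rectangle
with `R` rows and `W` columns, which covers the shape; cells off the shape are
empty and contribute nothing). -/
def rowWordRect (R W : ℕ) (T : ℕ → ℕ → Finset ℕ) : List ℕ :=
  ((List.range R).map (fun i =>
    (((List.range W).reverse).map (fun j => cellWord (T (i + 1) (j + 1)))).flatten)).flatten

/-- The column word: columns are read from rightmost to leftmost, each column
from top to bottom, the entries of each cell in decreasing order. -/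
def colWordRect (R W : ℕ) (T : ℕ → ℕ → Finset ℕ) : List ℕ :=
  (((List.range W).reverse).map (fun j =>
    ((List.range R).map (fun i => cellWord (T (i + 1) (j + 1)))).flatten)).flatten

/-- The row word of a contratableau whose rows are indexed from the bottom
(`1, …, n`): rows are read from top to bottom (i.e. row `n` first), each row
from right to left, cell entries in decreasing order. -/
def contraRowWord (n W : ℕ) (T : ℕ → ℕ → Finset ℕ) : List ℕ :=
  (((List.range n).reverse).map (fun j =>
    (((List.range W).reverse).map (fun c => cellWord (T (j + 1) (c + 1)))).flatten)).flatten

/-- A word is dominant if every prefix contains at least as many `i`'s as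
`(i+1)`'s, for every `i ≥ 1`. -/
def Dominant (u : List ℕ) : Prop :=
  ∀ t i, 1 ≤ i → (u.take t).count (i + 1) ≤ (u.take t).count i

/-- The row word of the superstandard tableau `T_lam` of shape and weight
`lam` (its `i`-th row consists of `lam i` many `i`'s), for `lam ∈ P[n]`. -/
def superWord (n : ℕ) (lam : ℕ → ℕ) : List ℕ :=
  ((List.range n).map (fun i => List.replicate (lam (i + 1)) (i + 1))).flatten

/-- A word `u` is `lam`-dominant if `r(T_lam) * u` is dominant. -/
def LamDominant (n : ℕ) (lam : ℕ → ℕ) (u : List ℕ) : Prop :=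
  Dominant (superWord n lam ++ u)

/-- The number of occurrences of the entry `v` in row `r` of `T`
(columns `1, …, W`). -/
def rowOcc (W : ℕ) (T : ℕ → ℕ → Finset ℕ) (r v : ℕ) : ℕ :=
  ∑ c ∈ Finset.Icc 1 W, if v ∈ T r c then 1 else 0

/-- The number of occurrences of the entry `v` in `T` (the `v`-th coordinate
of the weight `wt T`), rows `1, …, R` and columns `1, …, W`. -/
def wtT (R W : ℕ) (T : ℕ → ℕ → Finset ℕ) (v : ℕ) : ℕ :=
  ∑ r ∈ Finset.Icc 1 R, rowOcc W T r v

/-- The total number of entries `|T|` of a set-valued tableau. -/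
def sizeT (R W : ℕ) (T : ℕ → ℕ → Finset ℕ) : ℕ :=
  ∑ r ∈ Finset.Icc 1 R, ∑ c ∈ Finset.Icc 1 W, (T r c).card

/-- A Gelfand-Tsetlin pattern of size `n`: a triangular array of integers
`x i j` (`1 ≤ j ≤ i ≤ n`) with `NE_{i,j} = x i j - x (i-1) j ≥ 0` and
`SE_{i,j} = x (i-1) j - x i (j+1) ≥ 0` for all `1 ≤ j < i ≤ n`, normalized to
vanish outside the triangle. -/
def IsGT (n : ℕ) (x : ℕ → ℕ → ℤ) : Prop :=
  (∀ i j, 1 ≤ j → j < i → i ≤ n → x (i - 1) j ≤ x i j ∧ x i (j + 1) ≤ x (i - 1) j) ∧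
  (∀ i j, ¬ (1 ≤ j ∧ j ≤ i ∧ i ≤ n) → x i j = 0)

/-- A GT pattern in `GT_ℤ(lam)`: bottom row equal to `lam`. -/
def IsGTZ (n : ℕ) (lam : ℕ → ℕ) (x : ℕ → ℕ → ℤ) : Prop :=
  IsGT n x ∧ ∀ j, 1 ≤ j → j ≤ n → x n j = (lam j : ℤ)

/-- A valid set of marks on a GT pattern: `M ⊆ {(i,j) : 1 ≤ j < i ≤ n` and
`SE_{i,j}(x) > 0}`. -/
def MarksOK (n : ℕ) (x : ℕ → ℕ → ℤ) (M : Finset (ℕ × ℕ)) : Prop :=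
  ∀ p ∈ M, 1 ≤ p.2 ∧ p.2 < p.1 ∧ p.1 ≤ n ∧ 0 < x (p.1 - 1) p.2 - x p.1 (p.2 + 1)

/-- A marked GT pattern in `MGT_ℤ(lam)`. -/
def IsMGTZ (n : ℕ) (lam : ℕ → ℕ) (x : ℕ → ℕ → ℤ) (M : Finset (ℕ × ℕ)) : Prop :=
  IsGTZ n lam x ∧ MarksOK n x M

/-- The map `Υ` from marked GT patterns to set-valued tableaux, in closed form:
the entry `i` lies in the box in row `r`, column `c` iff `x_{i-1,r} < c ≤ x_{i,r}`
(the horizontal strip `x^{(i)}/x^{(i-1)}` is filled with `i`'s), or `(i,r) ∈ M`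
and `c = x_{i-1,r}` (for a mark, `i` is added to the rightmost box of row `r`
of `X^{(i-1)}`, the box containing `i-1` there). -/
def Upsilon (n : ℕ) (x : ℕ → ℕ → ℤ) (M : Finset (ℕ × ℕ)) : ℕ → ℕ → Finset ℕ :=
  fun r c => (Finset.Icc 1 n).filter (fun i =>
    (x (i - 1) r < (c : ℤ) ∧ (c : ℤ) ≤ x i r) ∨ ((i, r) ∈ M ∧ (c : ℤ) = x (i - 1) r))

/-- The map `Ω` from marked GT patterns to set-valued contratableaux of shape
`lam`, in closed form.  Rows are indexed from the bottom and the box in row `j`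
and column `c` is the `d`-th box from the right where `d = lam 1 + 1 - c`.
The entry `v = n + 1 - i` lies there iff `y_{i-1,j} < d ≤ y_{i,j}` (the boxes
of `C(y^{(i)})/C(y^{(i-1)})` are filled with `n+1-i`), or `(i,j) ∈ M` and
`d = y_{i-1,j}` (for a mark, `n+1-i` is added to the leftmost box of row `j`
of `Y^{(i-1)}`, the box containing `n+2-i` there). -/
def Omega (n : ℕ) (lam : ℕ → ℕ) (y : ℕ → ℕ → ℤ) (M : Finset (ℕ × ℕ)) : ℕ → ℕ → Finset ℕ :=
  fun j c => (Finset.Icc 1 n).filter (fun v =>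
    (y (n - v) j < (lam 1 : ℤ) + 1 - (c : ℤ) ∧ (lam 1 : ℤ) + 1 - (c : ℤ) ≤ y (n + 1 - v) j) ∨
      ((n + 1 - v, j) ∈ M ∧ (lam 1 : ℤ) + 1 - (c : ℤ) = y (n - v) j))

/-- `N_{i,k} = lam i + (number of occurrences of i in the top k rows of T)`. -/
def Ndom (W : ℕ) (lam : ℕ → ℕ) (T : ℕ → ℕ → Finset ℕ) (i k : ℕ) : ℕ :=
  lam i + ∑ r ∈ Finset.Icc 1 k, rowOcc W T r i

/-- `N↑_{i,k} = mu i + (number of occurrences of i in rows k, k+1, …, n from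
the bottom of a contratableau)`. -/
def Nup (n W : ℕ) (mu : ℕ → ℕ) (T : ℕ → ℕ → Finset ℕ) (i k : ℕ) : ℕ :=
  mu i + ∑ r ∈ Finset.Icc k n, rowOcc W T r i

/-- The GT pattern `Y_T` with entries `y_{i,j} = N_{n-i+j, n-i}` (normalized to
`0` outside the triangle). -/
def Ypat (n W : ℕ) (lam : ℕ → ℕ) (T : ℕ → ℕ → Finset ℕ) : ℕ → ℕ → ℤ :=
  fun i j => if 1 ≤ j ∧ j ≤ i ∧ i ≤ n then (Ndom W lam T (n - i + j) (n - i) : ℤ) else 0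

/-- The transported mark set `M' = {(n+1-j, i-j) : (i,j) ∈ M}`. -/
def MarksOf (n : ℕ) (M : Finset (ℕ × ℕ)) : Finset (ℕ × ℕ) :=
  M.image (fun p => (n + 1 - p.2, p.1 - p.2))

/-- The stable Grothendieck polynomial `G_lam(x_1, …, x_n)`, a polynomial in
variables `X 1, …, X n`. -/
noncomputable def Groth (n : ℕ) (lam : ℕ → ℕ) : MvPolynomial ℕ ℤ :=
  ∑ᶠ T ∈ {T : ℕ → ℕ → Finset ℕ | IsSSVT n (ShapeBox lam) T},
    (-1 : MvPolynomial ℕ ℤ) ^ (sizeT n (lam 1) T - sumParts n lam) *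
      ∏ k ∈ Finset.Icc 1 n, MvPolynomial.X k ^ wtT n (lam 1) T k

/-- The word of row `i + 1` of `T`, read from right to left over the columns `1, …, W`. -/
def rowWord (W : ℕ) (T : ℕ → ℕ → Finset ℕ) (i : ℕ) : List ℕ :=
  (((List.range W).reverse).map (fun j => cellWord (T (i + 1) (j + 1)))).flatten

lemma mem_cellWord (S : Finset ℕ) (v : ℕ) : v ∈ cellWord S ↔ v ∈ S := by
  simp [cellWord]

lemma count_cellWord (S : Finset ℕ) (v : ℕ) :
    (cellWord S).count v = if v ∈ S then 1 else 0 := by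
  have hnd : (cellWord S).Nodup := by simp [cellWord]
  rw [hnd.count]
  simp only [mem_cellWord]

lemma count_rowWord (W : ℕ) (T : ℕ → ℕ → Finset ℕ) (i v : ℕ) :
    (rowWord W T i).count v = rowOcc W T (i + 1) v := by
  unfold rowWord rowOcc
  induction W with
  | zero => simp
  | succ W ih =>
    rw [Finset.sum_Icc_succ_top (by omega), ← ih, List.range_succ]
    simp [count_cellWord, add_comm]

lemma rowWordRect_succ (R W : ℕ) (T : ℕ → ℕ → Finset ℕ) :
    rowWordRect (R + 1) W T = rowWordRect R W T ++ rowWord W T R := by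
  simp [rowWordRect, rowWord, List.range_succ]

lemma count_rowWordRect (R W : ℕ) (T : ℕ → ℕ → Finset ℕ) (v : ℕ) :
    (rowWordRect R W T).count v = ∑ r ∈ Finset.Icc 1 R, rowOcc W T r v := by
  induction R with
  | zero => simp [rowWordRect]
  | succ R ih =>
    rw [rowWordRect_succ, List.count_append, ih, count_rowWord,
      Finset.sum_Icc_succ_top (by omega)]

lemma rowWordRect_prefix (W : ℕ) (T : ℕ → ℕ → Finset ℕ) {k m : ℕ} (h : k ≤ m) :
    rowWordRect k W T <+: rowWordRect m W T := by
  induction m, h using Nat.le_induction with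
  | base => exact List.prefix_rfl
  | succ m _ ih =>
    rw [rowWordRect_succ]
    exact ih.trans (List.prefix_append _ _)

lemma count_superWord (n : ℕ) (lam : ℕ → ℕ) (a : ℕ) (ha : 1 ≤ a) :
    (superWord n lam).count a = if a ≤ n then lam a else 0 := by
  induction n with
  | zero => simp [superWord]; omega
  | succ n ih =>
    have h : superWord (n + 1) lam
        = superWord n lam ++ List.replicate (lam (n + 1)) (n + 1) := by
      simp [superWord, List.range_succ]
    rw [h, List.count_append, ih, List.count_replicate]
    rcases lt_trichotomy a (n + 1) with h1 | h1 | h1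
    · have : ¬ n + 1 = a := by omega
      simp [this, show a ≤ n by omega, show a ≤ n + 1 by omega]
    · subst h1; simp
    · have : ¬ n + 1 = a := by omega
      simp [this, show ¬ a ≤ n by omega, show ¬ a ≤ n + 1 by omega]

/-- Rows are weakly increasing also between non-adjacent cells; the chain of adjacent comparisons
does not break because every cell of the shape is nonempty. -/
lemma row_mono {n : ℕ} {mu : ℕ → ℕ} {T : ℕ → ℕ → Finset ℕ} (hT : IsSSVT n (ShapeBox mu) T)
    {r c d : ℕ} (hcd : c + 1 ≤ d) :
    ∀ x ∈ T r c, ∀ y ∈ T r d, x ≤ y := by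
  obtain ⟨hne, -, hoff, hrow, -⟩ := hT
  have hbox : ∀ e x, x ∈ T r e → ShapeBox mu r e := by
    intro e x hx
    by_contra hb
    simp [hoff r e hb] at hx
  induction d, hcd using Nat.le_induction with
  | base => exact fun x hx y hy => hrow r c (hbox _ _ hx) (hbox _ _ hy) x hx y hy
  | succ d hd ih =>
    intro x hx y hy
    have hb := hbox _ _ hy
    have hb' : ShapeBox mu r d := by
      refine ⟨hb.1, ?_, ?_⟩
      · have := (hbox _ _ hx).2.1
        omega
      · have := hb.2.2
        omega
    obtain ⟨z, hz⟩ := hne r d hb'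
    exact (ih x hx z hz).trans (hrow r d hb' hb z hz y hy)

lemma rowWord_pairwise {n : ℕ} {mu : ℕ → ℕ} {T : ℕ → ℕ → Finset ℕ}
    (hT : IsSSVT n (ShapeBox mu) T) (W i : ℕ) :
    (rowWord W T i).Pairwise (· ≥ ·) := by
  unfold rowWord
  rw [List.pairwise_flatten]
  constructor
  · intro l hl
    obtain ⟨j, -, rfl⟩ := List.mem_map.1 hl
    unfold cellWord
    rw [List.pairwise_reverse]
    exact Finset.pairwise_sort _ _
  · rw [List.pairwise_map, List.pairwise_reverse]
    refine List.pairwise_lt_range.imp ?_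
    intro c d hcd x hx y hy
    rw [mem_cellWord] at hx hy
    exact row_mono hT (by omega) y hy x hx

lemma exists_prefix (a : ℕ) (w : List ℕ) (hw : w.Pairwise (· ≥ ·)) :
    ∃ p, p <+: w ∧ p.count a = 0 ∧ p.count (a + 1) = w.count (a + 1) := by
  induction w with
  | nil => exact ⟨[], by simp⟩
  | cons x w ih =>
    rw [List.pairwise_cons] at hw
    by_cases hx : x ≤ a
    · refine ⟨[], by simp, by simp, ?_⟩
      symm
      rw [List.count_nil, List.count_eq_zero]
      intro hmem
      rcases List.mem_cons.1 hmem with h | h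
      · omega
      · have := hw.1 _ h
        omega
    · obtain ⟨p, hp, h0, h1⟩ := ih hw.2
      refine ⟨x :: p, List.cons_prefix_cons.2 ⟨rfl, hp⟩, ?_, ?_⟩
      · rw [List.count_cons, h0]
        simp
        omega
      · rw [List.count_cons, List.count_cons, h1]

/-- The nontrivial interlacing inequality, obtained from dominance at the moment when all `a+1`'s
but none of the `a`'s of row `k+1` have been read. -/
lemma Ndom_succ_succ_le {n : ℕ} {lam mu : ℕ → ℕ} {T : ℕ → ℕ → Finset ℕ}
    (hT : IsSSVT n (ShapeBox mu) T) {W : ℕ} (hdom : LamDominant n lam (rowWordRect n W T))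
    {a k : ℕ} (ha : 1 ≤ a) (han : a + 1 ≤ n) (hk : k < n) :
    Ndom W lam T (a + 1) (k + 1) ≤ Ndom W lam T a k := by
  obtain ⟨p, hp, h0, h1⟩ := exists_prefix a _ (rowWord_pairwise hT W k)
  have hpre : superWord n lam ++ (rowWordRect k W T ++ p)
      <+: superWord n lam ++ rowWordRect n W T := by
    rw [List.prefix_append_right_inj]
    refine List.IsPrefix.trans ?_ (rowWordRect_prefix W T (show k + 1 ≤ n from hk))
    rw [rowWordRect_succ, List.prefix_append_right_inj]
    exact hp
  have h := hdom (superWord n lam ++ (rowWordRect k W T ++ p)).length a ha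
  rw [← List.prefix_iff_eq_take.1 hpre] at h
  simp only [List.count_append, h0, h1, count_rowWordRect, count_rowWord,
    count_superWord n lam a ha, count_superWord n lam (a + 1) (by omega),
    if_pos han, if_pos (show a ≤ n by omega)] at h
  unfold Ndom
  rw [Finset.sum_Icc_succ_top (by omega)]
  omega

/-- Let `lam, mu, nu ∈ P[n]` and let `T` be a `lam`-dominant
set-valued tableau of shape `mu` with entries `≤ n` and weight `nu - lam`.
Then the triangular array `Y_T` with `y_{i,j} = N_{n-i+j,n-i}` (where
`N_{i,k} = lam i + (number of occurrences of i in the top k rows of T)`) is a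
Gelfand-Tsetlin pattern lying in `GT_ℤ(lam)`. -/
theorem Ypat_mem_GTZ (n : ℕ) (hn : 0 < n) (lam mu nu : ℕ → ℕ)
    (hlam : IsPartition n lam) (hmu : IsPartition n mu) (hnu : IsPartition n nu)
    (T : ℕ → ℕ → Finset ℕ)
    (hT : IsSSVT n (ShapeBox mu) T)
    (hdom : LamDominant n lam (rowWordRect n (mu 1) T))
    (hwt : ∀ i, 1 ≤ i → i ≤ n → lam i + wtT n (mu 1) T i = nu i) :
    IsGTZ n lam (Ypat n (mu 1) lam T) := by
  refine ⟨⟨?_, ?_⟩, ?_⟩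
  · intro i j hj hji hin
    unfold Ypat
    rw [if_pos (by omega), if_pos (by omega), if_pos (by omega)]
    have e1 : n - (i - 1) + j = (n - i + j) + 1 := by omega
    have e2 : n - (i - 1) = (n - i) + 1 := by omega
    have e3 : n - i + (j + 1) = (n - i + j) + 1 := by omega
    rw [e1, e2, e3]
    constructor
    · exact_mod_cast Ndom_succ_succ_le hT hdom (by omega) (by omega) (by omega)
    · have : Ndom (mu 1) lam T (n - i + j + 1) (n - i)
          ≤ Ndom (mu 1) lam T (n - i + j + 1) (n - i + 1) := by
        unfold Ndom
        rw [Finset.sum_Icc_succ_top (by omega)]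
        omega
      exact_mod_cast this
  · intro i j h
    exact if_neg h
  · intro j hj hjn
    unfold Ypat
    rw [if_pos ⟨hj, hjn, le_refl n⟩]
    simp [Ndom]
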